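/- arXiv:1404.0873 — 2 statements merged into one kernel-verified Lean document; each statement's English description precedes it below -/
import Mathlib

section
/- Let G be a group, N a normal subgroup of G, p a prime, and e, k positive integers; set m = ⌊log_p k⌋ (the largest nonnegative integer m with p^m ≤ k). Assume that the iterated commutator subgroup [N, _{k+1} G] is trivial and that [n^{p^e}, g] = 1 for all n ∈ N and g ∈ G. Then every element of the commutator subgroup ⁅N, G⁆ has order dividing p^{e+m(k−1)}. (This is Theorem 2.6 of the paper, stated internally: there G* is a group with normal subgroup N* satisfying these hypotheses and the conclusion is exp([N*,G*]) divides p^{e+m(k−1)}.) -/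
/-!
Write `N_i = [N, _i G]`, so that `N_{k+1} = 1` and `⁅N_a, N_b⁆ ≤ N_{a+b}`. By downward induction
on `i`, every `y ∈ N_i` (`1 ≤ i ≤ k`) satisfies `y ^ n = 1` with `n = p ^ (e + m * (k - i))`; the
case `i = 1` is the theorem.

The engine is a weak form of the Hall–Petresco formula (`PolySeq.mul_pow_of_choose`): if
`K 1 ≥ K 2 ≥ …` is a filtration with `⁅K r, K s⁆ ≤ K (r + s)` and `d ^ C(n, j) = 1` for all `j ≥ 2`
and `d ∈ K j`, then `x ↦ x ^ n` is multiplicative on `K 1`. It is applied to `K 1 = ⟨x, N_i⟩` with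
`x ∈ G` and `K j = N_{i+j-1}` for `j ≥ 2`. If `2 ≤ j ≤ k`, the `p`-part of `j` is at most `p ^ m`, so
`C(n, j)` is divisible by `n / p ^ m`, which kills `N_{i+1} ≥ K j` by induction; if `j > k`, then
`K j = 1`. Hence for `y = ⁅g, x⁆` with `x ∈ N_{i-1}`, centrality of `x ^ n` gives
`x ^ n = g x ^ n g⁻¹ = (y x) ^ n = y ^ n x ^ n`, so `y ^ n = 1`; multiplicativity on `N_i` then carries
this from the generators to all of `N_i`.

The Hall–Petresco formula is obtained from polynomial sequences `ℕ → G`: those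
whose `r`-th difference takes values in `K r`. They form a group (Lazard–Leibman,
`PolySeq.isPoly_closed`), so `t ↦ (a b) ^ t (a ^ t b ^ t)⁻¹` is polynomial. A polynomial sequence
vanishing on `0, …, j - 1` has its `j`-th value in `K j`, which allows its Taylor
coefficients to be stripped off one at a time.
-/

/-- The iterated commutator subgroup `[N, _k G]`. -/
def iterCommG {G : Type*} [Group G] (N : Subgroup G) : ℕ → Subgroup G
  | 0 => N
  | k + 1 => ⁅iterCommG N k, (⊤ : Subgroup G)⁆

/-- `𝕌_i(H)`: the subgroup generated by all `p^i`-th powers of elements of `H`. -/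
def pPow {G : Type*} [Group G] (p i : ℕ) (H : Subgroup G) : Subgroup G :=
  Subgroup.closure {x | ∃ h ∈ H, x = h ^ p ^ i}

/-- A relative central extension of the pair `(G, N)`. -/
structure RelCentralExt {M G : Type*} [Group M] [Group G] (σ : M →* G) (N : Subgroup G) where
  /-- the action of `G` on `M`, written `m ↦ m^g` in the paper -/
  act : M → G → M
  act_mul : ∀ m n g, act (m * n) g = act m g * act n g
  act_one : ∀ m, act m 1 = m
  act_act : ∀ m g h, act (act m g) h = act m (g * h)
  range_eq : σ.range = N
  sigma_act : ∀ m g, σ (act m g) = g⁻¹ * σ m * g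
  act_sigma : ∀ m m₁, act m (σ m₁) = m₁⁻¹ * m * m₁
  ker_act : ∀ a ∈ σ.ker, ∀ g : G, act a g = a

namespace RelCentralExt

variable {M G : Type*} [Group M] [Group G] {σ : M →* G} {N : Subgroup G}

/-- The `G`-commutator `[m, g] = m⁻¹ · m^g`. -/
def cmt (E : RelCentralExt σ N) (m : M) (g : G) : M := m⁻¹ * E.act m g

/-- The subgroup `[M', G]` generated by all `G`-commutators `[m, g]`, `m ∈ M'`, `g ∈ G`. -/
def commSub (E : RelCentralExt σ N) (M' : Subgroup M) : Subgroup M :=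
  Subgroup.closure {x | ∃ m ∈ M', ∃ g : G, x = E.cmt m g}

/-- The iterated subgroup `[M', _n G]`. -/
def iterComm (E : RelCentralExt σ N) (M' : Subgroup M) : ℕ → Subgroup M
  | 0 => M'
  | n + 1 => E.commSub (E.iterComm M' n)

end RelCentralExt

/-- The (paper-convention) commutator `[a, b] = a⁻¹ b⁻¹ a b`. -/
def pcmt {G : Type*} [Group G] (a b : G) : G := a⁻¹ * b⁻¹ * a * b


section

open scoped commutatorElement

/-! ### Polynomial sequences in a filtered group -/

namespace PolySeq

variable {G : Type*} [Group G]

/-- The (left) difference `t ↦ f (t + 1) * (f t)⁻¹`. -/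
def diff (f : ℕ → G) : ℕ → G := (fun t => f (t + 1)) * f⁻¹

/-- `IsPoly K r i f`: for every `l ≤ r`, the `l`-th difference of `f` takes values in `K (i + l)`.
A polynomial sequence of degree shift `i` satisfies this for all `r`; the truncation at
`r` is what makes induction possible in `isPoly_closed`. -/
def IsPoly (K : ℕ → Subgroup G) : ℕ → ℕ → (ℕ → G) → Prop
  | 0, i, f => ∀ t, f t ∈ K i
  | r + 1, i, f => (∀ t, f t ∈ K i) ∧ IsPoly K r (i + 1) (diff f)

variable {K : ℕ → Subgroup G}

lemma IsPoly.val {r i : ℕ} {f : ℕ → G} (h : IsPoly K r i f) (t : ℕ) : f t ∈ K i := by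
  cases r with
  | zero => exact h t
  | succ r => exact h.1 t

lemma IsPoly.pred {r i : ℕ} {f : ℕ → G} (h : IsPoly K (r + 1) i f) : IsPoly K r i f := by
  induction r generalizing i f with
  | zero => exact h.1
  | succ r ih => exact ⟨h.1, ih h.2⟩

lemma IsPoly.mono (hK : Antitone K) {r i j : ℕ} (hij : i ≤ j) {f : ℕ → G}
    (h : IsPoly K r j f) : IsPoly K r i f := by
  induction r generalizing i j f with
  | zero => exact fun t => hK hij (h t)
  | succ r ih => exact ⟨fun t => hK hij (h.1 t), ih (Nat.succ_le_succ hij) h.2⟩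

lemma IsPoly.one (r i : ℕ) : IsPoly K r i 1 := by
  induction r generalizing i with
  | zero => exact fun t => one_mem _
  | succ r ih =>
    refine ⟨fun t => one_mem _, ?_⟩
    have : diff (1 : ℕ → G) = 1 := by funext t; simp [diff]
    rw [this]; exact ih _

/-- The Lazard–Leibman theorem, truncated at order `r`: polynomial sequences form a group, and
commutators add degree shifts. The difference of a product, inverse or commutator is a product of
conjugates of commutators involving the differences of the factors, all of which are covered by the
statement of order `r` with the shift raised by one. -/
lemma isPoly_closed (hK : Antitone K) (hcomm : ∀ i j, ⁅K i, K j⁆ ≤ K (i + j)) (r : ℕ) :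
    (∀ i f g, IsPoly K r i f → IsPoly K r i g → IsPoly K r i (f * g)) ∧
    (∀ i f, IsPoly K r i f → IsPoly K r i f⁻¹) ∧
    (∀ i j f g, IsPoly K r i f → IsPoly K r j g → IsPoly K r (i + j) ⁅f, g⁆) := by
  induction r with
  | zero =>
    refine ⟨fun i f g hf hg t => mul_mem (hf t) (hg t), fun i f hf t => inv_mem (hf t),
      fun i j f g hf hg t => hcomm i j (Subgroup.commutator_mem_commutator (hf t) (hg t))⟩
  | succ r ih =>
    obtain ⟨hmul, hinv, hcom⟩ := ih
    have hconj : ∀ {i j : ℕ} {h w : ℕ → G}, IsPoly K r j h → IsPoly K r i w →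
        IsPoly K r i (h * w * h⁻¹) := by
      intro i j h w hh hw
      have : h * w * h⁻¹ = ⁅h, w⁆ * w := by simp [commutatorElement_def]
      rw [this]
      exact hmul _ _ _ ((hcom _ _ _ _ hh hw).mono hK (by omega)) hw
    refine ⟨fun i f g hf hg => ⟨fun t => mul_mem (hf.1 t) (hg.1 t), ?_⟩,
      fun i f hf => ⟨fun t => inv_mem (hf.1 t), ?_⟩, fun i j f g hf hg =>
      ⟨fun t => hcomm i j (Subgroup.commutator_mem_commutator (hf.1 t) (hg.1 t)), ?_⟩⟩
    · have : diff (f * g) = diff f * (f * diff g * f⁻¹) := by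
        funext t; simp [diff, mul_assoc]
      rw [this]
      exact hmul _ _ _ hf.2 (hconj hf.pred hg.2)
    · have : diff f⁻¹ = f⁻¹ * (diff f)⁻¹ * f⁻¹⁻¹ := by
        funext t; simp [diff]
      rw [this]
      exact hconj (hinv _ _ hf.pred) (hinv _ _ hf.2)
    · have hc := hcom _ _ _ _ hf.pred hg.pred
      have : diff ⁅f, g⁆ = (diff f * ⁅f, diff g⁆ * (diff f)⁻¹) * ⁅diff f * diff g, ⁅f, g⁆⁆ *
          (⁅f, g⁆ * (⁅diff f, diff g⁆ * (diff g * ⁅diff f, g⁆ * (diff g)⁻¹)) * ⁅f, g⁆⁻¹) := by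
        funext t; simp [diff, commutatorElement_def, mul_assoc]
      rw [this]
      refine hmul _ _ _ (hmul _ _ _ (hconj hf.2 ?_) ?_) (hconj hc (hmul _ _ _ ?_ (hconj hg.2 ?_)))
      · exact (hcom _ _ _ _ hf.pred hg.2).mono hK (by omega)
      · exact (hcom 1 _ _ _ (hmul _ _ _ (hf.2.mono hK (by omega)) (hg.2.mono hK (by omega)))
          hc).mono hK (by omega)
      · exact (hcom _ _ _ _ hf.2 hg.2).mono hK (by omega)
      · exact (hcom _ _ _ _ hf.2 hg.pred).mono hK (by omega)

lemma isPoly_choose (hK : Antitone K) (r i j : ℕ) {d : G} (hd : d ∈ K (i + j)) :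
    IsPoly K r i (fun t => d ^ t.choose j) := by
  induction r generalizing i j with
  | zero => exact fun t => pow_mem (hK (by omega) hd) _
  | succ r ih =>
    refine ⟨fun t => pow_mem (hK (by omega) hd) _, ?_⟩
    cases j with
    | zero =>
      have : diff (fun t => d ^ t.choose 0) = 1 := by funext t; simp [diff]
      rw [this]; exact IsPoly.one _ _
    | succ j =>
      have : diff (fun t => d ^ t.choose (j + 1)) = fun t => d ^ t.choose j := by
        funext t; simp [diff, Nat.choose_succ_succ, pow_add]
      rw [this]
      exact ih _ _ (by rwa [show i + 1 + j = i + (j + 1) by omega])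

/-- The `j`-th difference of `f` at `0` is `f j` when the earlier values of `f` are trivial. -/
lemma IsPoly.leading_mem {j i : ℕ} {f : ℕ → G} (hf : IsPoly K j i f) (h : ∀ t < j, f t = 1) :
    f j ∈ K (i + j) := by
  induction j generalizing i f with
  | zero => exact hf.val 0
  | succ j ih =>
    have := ih hf.2 (fun t ht => by simp [diff, h t (by omega), h (t + 1) (by omega)])
    rw [show i + (j + 1) = i + 1 + j by omega]
    simpa [diff, h j (by omega)] using this

/-- A polynomial sequence with trivial initial values is trivial at `n`, as soon as the binomial
exponents `C(n, j)` kill the possible remaining Taylor coefficients `d ∈ K j`. -/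
lemma eq_one_of_isPoly (hK : Antitone K) (hcomm : ∀ i j, ⁅K i, K j⁆ ≤ K (i + j)) (n j₀ : ℕ)
    (hpow : ∀ j, j₀ ≤ j → ∀ d ∈ K j, d ^ n.choose j = 1) (f : ℕ → G)
    (hf : ∀ r, IsPoly K r 0 f) (h : ∀ t < j₀, f t = 1) : f n = 1 := by
  obtain ⟨q, hq⟩ : ∃ q, n < j₀ + q := ⟨n + 1, by omega⟩
  induction q generalizing j₀ f with
  | zero => exact h n hq
  | succ q ih =>
    have hd : f j₀ ∈ K j₀ := by simpa using (hf j₀).leading_mem h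
    -- Dividing by the leading Taylor term `f j₀ ^ C(t, j₀)` makes the value at `j₀` trivial too.
    have key := ih (j₀ + 1) (fun j hj => hpow j (by omega))
      (f * (fun t => f j₀ ^ t.choose j₀)⁻¹)
      (fun r => (isPoly_closed hK hcomm r).1 _ _ _ (hf r) ((isPoly_closed hK hcomm r).2.1 _ _
        (isPoly_choose hK r 0 j₀ (by simpa using hd)))) ?_ (by omega)
    · simpa [hpow j₀ le_rfl _ hd] using key
    · intro t ht
      rcases Nat.lt_succ_iff_lt_or_eq.1 ht with ht | rfl
      · simp [h t ht, Nat.choose_eq_zero_of_lt ht]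
      · simp

/-- A weak Hall–Petresco formula: `n`-th powers are multiplicative on `K 1` when `C(n, j)` kills
`K j` for every `j ≥ 2`. -/
lemma mul_pow_of_choose (hK : Antitone K) (hcomm : ∀ i j, ⁅K i, K j⁆ ≤ K (i + j)) (n : ℕ)
    (hpow : ∀ j, 2 ≤ j → ∀ d ∈ K j, d ^ n.choose j = 1) {a b : G} (ha : a ∈ K 1) (hb : b ∈ K 1) :
    (a * b) ^ n = a ^ n * b ^ n := by
  have hlin : ∀ d ∈ K 1, ∀ r, IsPoly K r 0 (fun t => d ^ t) := fun d hd r => by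
    simpa using isPoly_choose hK r 0 1 (d := d) (by simpa using hd)
  have := eq_one_of_isPoly hK hcomm n 2 hpow
    ((fun t => (a * b) ^ t) * ((fun t => a ^ t) * (fun t => b ^ t))⁻¹)
    (fun r => by
      obtain ⟨hmul, hinv, -⟩ := isPoly_closed hK hcomm r
      exact hmul _ _ _ (hlin _ (mul_mem ha hb) r)
        (hinv _ _ (hmul _ _ _ (hlin _ ha r) (hlin _ hb r))))
    (fun t ht => by interval_cases t <;> simp)
  exact mul_inv_eq_one.1 this

end PolySeq

/-! ### The series `[N, _i G]` -/

section Filtration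

variable {G : Type*} [Group G]

/-- The three subgroups lemma modulo a normal subgroup `M`. -/
lemma commutator_le_of_rotate {A B C M : Subgroup G} [M.Normal] (h1 : ⁅⁅B, C⁆, A⁆ ≤ M)
    (h2 : ⁅⁅C, A⁆, B⁆ ≤ M) : ⁅⁅A, B⁆, C⁆ ≤ M := by
  have key : ∀ D : Subgroup G, D.map (QuotientGroup.mk' M) = ⊥ ↔ D ≤ M := fun D => by
    rw [Subgroup.map_eq_bot_iff, QuotientGroup.ker_mk']
  rw [← key] at h1 h2 ⊢
  rw [Subgroup.map_commutator, Subgroup.map_commutator] at h1 h2 ⊢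
  exact Subgroup.commutator_commutator_eq_bot_of_rotate h1 h2

/-- If `A` is abelian modulo `M` and `x` commutes with `A` modulo `M`, then `⟨x, A⟩` is abelian
modulo `M`. -/
lemma commutator_closure_insert_le {M A : Subgroup G} [M.Normal] {x : G}
    (hA : ⁅A, A⁆ ≤ M) (hx : ∀ a ∈ A, ⁅x, a⁆ ∈ M) :
    ⁅Subgroup.closure (insert x (A : Set G)), Subgroup.closure (insert x (A : Set G))⁆ ≤ M := by
  rw [← QuotientGroup.ker_mk' M, ← Subgroup.map_eq_bot_iff, Subgroup.map_commutator,
    MonoidHom.map_closure, Subgroup.commutator_eq_bot_iff_le_centralizer,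
    Subgroup.centralizer_closure, Subgroup.closure_le]
  have hcom : ∀ y z : G, ⁅y, z⁆ ∈ M →
      Commute (QuotientGroup.mk' M y) (QuotientGroup.mk' M z) := fun y z h => by
    rw [← commutatorElement_eq_one_iff_commute, ← map_commutatorElement]
    exact (QuotientGroup.eq_one_iff _).2 h
  rintro _ ⟨y, hy, rfl⟩
  rw [SetLike.mem_coe, Subgroup.mem_centralizer_iff]
  rintro _ ⟨z, hz, rfl⟩
  change Commute _ _
  rcases hy with rfl | hy <;> rcases hz with rfl | hz
  · exact Commute.refl _
  · exact (hcom _ _ (hx _ hz)).symm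
  · exact hcom _ _ (hx _ hy)
  · exact hcom _ _ (hA (Subgroup.commutator_mem_commutator hz hy))

variable {N : Subgroup G}

lemma iterCommG_normal (hN : N.Normal) (i : ℕ) : (iterCommG N i).Normal := by
  induction i with
  | zero => exact hN
  | succ i ih => exact Subgroup.commutator_normal _ _

lemma iterCommG_antitone (hN : N.Normal) : Antitone (iterCommG N) :=
  antitone_nat_of_succ_le fun i =>
    have := iterCommG_normal hN i
    Subgroup.commutator_le_left (iterCommG N i) ⊤

lemma commutator_iterCommG_le (hN : N.Normal) (a b : ℕ) :
    ⁅iterCommG N a, iterCommG N b⁆ ≤ iterCommG N (a + b) := by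
  induction b generalizing a with
  | zero =>
    exact (Subgroup.commutator_mono le_rfl le_top).trans (iterCommG_antitone hN (Nat.le_succ a))
  | succ b ih =>
    have := iterCommG_normal hN (a + (b + 1))
    rw [Subgroup.commutator_comm]
    refine commutator_le_of_rotate (A := iterCommG N b) (B := ⊤) ?_ ?_
    · rw [Subgroup.commutator_comm ⊤]
      exact (ih (a + 1)).trans (iterCommG_antitone hN (by omega))
    · exact Subgroup.commutator_mono (ih a) le_rfl

/-- The filtration `K 0 = K 1 = ⟨x, [N, _i G]⟩` and `K j = [N, _{i+j-1} G]` for `j ≥ 2`. -/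
def shiftedFiltration (N : Subgroup G) (i : ℕ) (x : G) (j : ℕ) : Subgroup G :=
  if j ≤ 1 then Subgroup.closure (insert x (iterCommG N i : Set G)) else iterCommG N (i + j - 1)

lemma shiftedFiltration_antitone (hN : N.Normal) (i : ℕ) (x : G) :
    Antitone (shiftedFiltration N i x) := by
  intro r s hrs
  unfold shiftedFiltration
  split_ifs with h1 h2 h2
  · exact le_rfl
  · omega
  · exact (iterCommG_antitone hN (by omega)).trans
      (fun y hy => Subgroup.subset_closure (Set.mem_insert_of_mem _ hy))
  · exact iterCommG_antitone hN (by omega)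

lemma commutator_shiftedFiltration_le (hN : N.Normal) {i : ℕ} (hi : 1 ≤ i) (x : G)
    (r s : ℕ) :
    ⁅shiftedFiltration N i x r, shiftedFiltration N i x s⁆ ≤ shiftedFiltration N i x (r + s) := by
  wlog hrs : s ≤ r generalizing r s
  · rw [Subgroup.commutator_comm, add_comm]
    exact this s r (by omega)
  by_cases hr : r ≤ 1
  · have hs : s ≤ 1 := by omega
    have := iterCommG_normal hN (i + 1)
    refine le_trans ?_ (shiftedFiltration_antitone hN i x (show r + s ≤ 2 by omega))
    simp only [shiftedFiltration, hr, hs, if_true]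
    rw [if_neg (by omega), show i + 2 - 1 = i + 1 by omega]
    refine commutator_closure_insert_le
      ((commutator_iterCommG_le hN i i).trans (iterCommG_antitone hN (by omega))) fun a ha => ?_
    change _ ∈ ⁅iterCommG N i, (⊤ : Subgroup G)⁆
    rw [Subgroup.commutator_comm]
    exact Subgroup.commutator_mem_commutator (Subgroup.mem_top x) ha
  · have h2 : ¬ r + s ≤ 1 := by omega
    by_cases hs : s ≤ 1
    · simp only [shiftedFiltration, hr, hs, h2, if_true, if_false]
      refine (Subgroup.commutator_mono le_rfl le_top).trans
        (iterCommG_antitone hN (show i + (r + s) - 1 ≤ (i + r - 1) + 1 by omega))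
    · simp only [shiftedFiltration, hr, hs, h2, if_false]
      exact (commutator_iterCommG_le hN _ _).trans (iterCommG_antitone hN (by omega))

/-- The Hall–Petresco formula for the filtration `shiftedFiltration N i x`. -/
lemma mul_pow_of_mem_iterCommG (hN : N.Normal) {i n : ℕ} (hi : 1 ≤ i)
    (hpow : ∀ j, 2 ≤ j → ∀ d ∈ iterCommG N (i + j - 1), d ^ n.choose j = 1) (x : G) {y : G}
    (hy : y ∈ iterCommG N i) : (y * x) ^ n = y ^ n * x ^ n := by
  refine PolySeq.mul_pow_of_choose (shiftedFiltration_antitone hN i x)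
    (commutator_shiftedFiltration_le hN hi x) n (fun j hj d hd => hpow j hj d ?_) ?_ ?_
  · simpa [shiftedFiltration, show ¬ j ≤ 1 by omega] using hd
  · exact Subgroup.subset_closure (Set.mem_insert_of_mem _ hy)
  · exact Subgroup.subset_closure (Set.mem_insert _ _)

/-- The induction step: if `n`-th powers in `N` are central and the binomial exponents `C(n, j)`,
`j ≥ 2`, kill the deeper terms, then `n` kills `[N, _{i+1} G]`. -/
lemma pow_eq_one_of_mem_iterCommG (hN : N.Normal) {i n : ℕ}
    (hpow : ∀ j, 2 ≤ j → ∀ d ∈ iterCommG N (i + 1 + j - 1), d ^ n.choose j = 1)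
    (hcent : ∀ x ∈ N, ∀ g, Commute g (x ^ n)) {y : G} (hy : y ∈ iterCommG N (i + 1)) :
    y ^ n = 1 := by
  change y ∈ ⁅iterCommG N i, (⊤ : Subgroup G)⁆ at hy
  rw [Subgroup.commutator_comm, Subgroup.commutator_def] at hy
  have hgen : Subgroup.closure {g | ∃ g₁ ∈ (⊤ : Subgroup G), ∃ g₂ ∈ iterCommG N i, ⁅g₁, g₂⁆ = g}
      = iterCommG N (i + 1) := by
    rw [← Subgroup.commutator_def, Subgroup.commutator_comm]; rfl
  induction hy using Subgroup.closure_induction with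
  | mem y hy =>
    have hyi := hgen ▸ Subgroup.subset_closure hy
    obtain ⟨g, -, x, hx, rfl⟩ := hy
    have hxN : x ∈ N := iterCommG_antitone hN (Nat.zero_le i) hx
    have h := mul_pow_of_mem_iterCommG hN (Nat.le_add_left 1 i) hpow x hyi
    -- `⁅g, x⁆ * x = g x g⁻¹`, whose `n`-th power is `x ^ n` because `x ^ n` is central.
    rw [commutatorElement_def, inv_mul_cancel_right, conj_pow, (hcent x hxN g).eq,
      mul_inv_cancel_right] at h
    exact right_eq_mul.1 h
  | one => exact one_pow n
  | mul a b ha hb iha ihb =>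
    rw [hgen] at ha hb
    rw [mul_pow_of_mem_iterCommG hN (Nat.le_add_left 1 i) hpow b ha, iha, ihb, one_mul]
  | inv a _ iha => rw [inv_pow, iha, inv_one]

end Filtration

end

/-- `C(p ^ (s + m), j)` has `p`-adic valuation `s + m - v_p(j)`, and `v_p(j) ≤ m` as `j ≤ k`. -/
lemma prime_pow_dvd_choose {p s m j k : ℕ} (hp : p.Prime) (hm : ∀ m' : ℕ, p ^ m' ≤ k → m' ≤ m)
    (hj : j ≠ 0) (hjk : j ≤ k) : p ^ s ∣ (p ^ (s + m)).choose j := by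
  by_cases hle : j ≤ p ^ (s + m)
  · have h := Nat.factorization_choose_prime_pow_add_factorization hp hle hj
    have hjm := hm _ ((Nat.ordProj_le p hj).trans hjk)
    exact (hp.pow_dvd_iff_le_factorization (Nat.choose_pos hle).ne').2 (by omega)
  · simp [Nat.choose_eq_zero_of_lt (not_le.1 hle)]

/-- Theorem 2.6: if `(G, N)` satisfies `[N, _{k+1} G] = 1` and `[n^{p^e}, g] = 1` for all
`n ∈ N`, `g ∈ G`, then every element of `⁅N, G⁆` has order dividing `p^{e + m(k-1)}`,
where `m = ⌊log_p k⌋`. -/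
theorem stmt_2 {G : Type*} [Group G] (N : Subgroup G) (hN : N.Normal)
    (p e k : ℕ) (hp : p.Prime) (he : 0 < e) (hk : 0 < k)
    (m : ℕ) (hm₁ : p ^ m ≤ k) (hm₂ : ∀ m' : ℕ, p ^ m' ≤ k → m' ≤ m)
    (h1 : iterCommG N (k + 1) = ⊥)
    (h2 : ∀ n ∈ N, ∀ g : G, pcmt (n ^ p ^ e) g = 1) :
    ∀ x ∈ ⁅N, (⊤ : Subgroup G)⁆, x ^ p ^ (e + m * (k - 1)) = 1 := by
  have hcent : ∀ E, ∀ x ∈ N, ∀ g, Commute g (x ^ p ^ (e + E)) := fun E x hx g => by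
    have h := h2 x hx g
    rw [pcmt, mul_assoc, ← mul_inv_rev, inv_mul_eq_one] at h
    rw [pow_add, pow_mul]
    exact Commute.pow_right h _
  have main : ∀ q i, i + 1 + q = k → ∀ y ∈ iterCommG N (i + 1), y ^ p ^ (e + m * q) = 1 := by
    intro q
    induction q with
    | zero =>
      intro i hi y hy
      refine pow_eq_one_of_mem_iterCommG hN (fun j hj d hd => ?_) (hcent _) hy
      -- Here `i + 1 = k`, so the terms beyond the first one are already trivial.
      have hd' := iterCommG_antitone hN (show k + 1 ≤ i + 1 + j - 1 by omega) hd
      rw [h1, Subgroup.mem_bot] at hd'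
      rw [hd', one_pow]
    | succ q ih =>
      intro i hi y hy
      refine pow_eq_one_of_mem_iterCommG hN (fun j hj d hd => ?_) (hcent _) hy
      by_cases hjk : j ≤ k
      · obtain ⟨c, hc⟩ := prime_pow_dvd_choose (s := e + m * q) hp hm₂ (by omega) hjk
        rw [mul_add_one, ← add_assoc, hc, pow_mul,
          ih (i + 1) (by omega) d (iterCommG_antitone hN (by omega) hd), one_pow]
      · have hd' := iterCommG_antitone hN (show k + 1 ≤ i + 1 + j - 1 by omega) hd
        rw [h1, Subgroup.mem_bot] at hd'
        rw [hd', one_pow]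
  exact main (k - 1) 0 (by omega)
end

section
/- Let (G,N) be a pair of finite groups with [N, _k G] = 1 for a positive integer k (the pair is nilpotent of class at most k), where N is a p-group of exponent p^e, and suppose N admits a complement K in G (N ∩ K = 1 and NK = G). Let σ : N* → G be a relative central extension of (G,N) whose kernel satisfies ker σ ≤ [N*, G]. Then, with m = ⌊log_p k⌋, every element of ker σ has order dividing p^{e+m(k−1)}. (This is the content of Theorem 2.7 of the paper: ker σ of a covering pair is isomorphic to the Schur multiplier M(G,N), so exp(M(G,N)) divides p^{e+m(k−1)}.) -/
open scoped commutatorElement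

/-! ### Polynomial sequences in a filtered group -/

/-- A decreasing chain of subgroups `F 0 ≥ F 1 ≥ ⋯` with `[F a, F b] ≤ F (a + b)`.  Each `F i` is
normalised by `F 0`, but `F 0` need not be the whole group. -/
structure IsGroupFiltration {G : Type*} [Group G] (F : ℕ → Subgroup G) : Prop where
  anti : Antitone F
  comm : ∀ a b : ℕ, ∀ x ∈ F a, ∀ y ∈ F b, ⁅x, y⁆ ∈ F (a + b)

theorem IsGroupFiltration.conj_mem {G : Type*} [Group G] {F : ℕ → Subgroup G}
    (hF : IsGroupFiltration F) {a b : ℕ} {g z : G} (hg : g ∈ F a) (hz : z ∈ F b) :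
    g * z * g⁻¹ ∈ F b := by
  have h := hF.comm 0 b g (hF.anti (Nat.zero_le a) hg) z hz
  rw [zero_add] at h
  have h2 := (F b).mul_mem h hz
  simpa [commutatorElement_def, mul_assoc] using h2

theorem IsGroupFiltration.conj_mem' {G : Type*} [Group G] {F : ℕ → Subgroup G}
    (hF : IsGroupFiltration F) {a b : ℕ} {g z : G} (hg : g ∈ F a) (hz : z ∈ F b) :
    g⁻¹ * z * g ∈ F b := by
  simpa using hF.conj_mem ((F a).inv_mem hg) hz

/-- The subgroups `{(a, b) | a ∈ F i, a⁻¹ * b ∈ F (i + 1)}` of `G × G`.  They form a filtration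
for which the `i`-th difference of `n ↦ (w n, w (n + 1))` lies in the `i`-th term exactly when the
`i`-th and `(i + 1)`-st differences of `w` lie in `F i` and `F (i + 1)`. -/
def shiftFiltration {G : Type*} [Group G] {F : ℕ → Subgroup G}
    (hF : IsGroupFiltration F) (i : ℕ) : Subgroup (G × G) where
  carrier := {q | q.1 ∈ F i ∧ q.1⁻¹ * q.2 ∈ F (i + 1)}
  one_mem' := by simp [(F i).one_mem, (F (i + 1)).one_mem]
  mul_mem' := by
    rintro ⟨a, b⟩ ⟨c, d⟩ ⟨h1, h2⟩ ⟨h3, h4⟩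
    refine ⟨(F i).mul_mem h1 h3, ?_⟩
    have := (F (i + 1)).mul_mem (hF.conj_mem' h3 h2) h4
    simpa [mul_assoc] using this
  inv_mem' := by
    rintro ⟨a, b⟩ ⟨h1, h2⟩
    refine ⟨(F i).inv_mem h1, ?_⟩
    have := hF.conj_mem h1 ((F (i + 1)).inv_mem h2)
    simpa [mul_assoc] using this

theorem shiftFiltration_isGroupFiltration {G : Type*} [Group G] {F : ℕ → Subgroup G}
    (hF : IsGroupFiltration F) : IsGroupFiltration (shiftFiltration hF) where
  anti := by
    intro i j hij q hq
    exact ⟨hF.anti hij hq.1, hF.anti (Nat.succ_le_succ hij) hq.2⟩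
  comm := by
    rintro a b ⟨x, x'⟩ ⟨hx, hu⟩ ⟨y, y'⟩ ⟨hy, hv⟩
    refine ⟨hF.comm a b x hx y hy, ?_⟩
    have hy' : y' ∈ F b := by
      have := (F b).mul_mem hy (hF.anti (Nat.le_succ b) hv)
      simpa using this
    -- `[x', y']` is expanded via `x' = x * u` and `y' = y * v`
    have h1 : ⁅x⁻¹ * x', y'⁆ ∈ F (a + b + 1) := by
      have := hF.comm (a + 1) b _ hu _ hy'
      rwa [show a + 1 + b = a + b + 1 by omega] at this
    have h2 : ⁅x, y⁻¹ * y'⁆ ∈ F (a + b + 1) := hF.comm a (b + 1) _ hx _ hv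
    have h3 := hF.conj_mem' (hF.comm a b x hx y hy) (hF.conj_mem hx h1)
    have h4 := (F (a + b + 1)).mul_mem h3 (hF.conj_mem hy h2)
    change ⁅x, y⁆⁻¹ * ⁅x', y'⁆ ∈ F (a + b + 1)
    convert h4 using 1
    simp only [commutatorElement_def]
    group

/-- The multiplicative difference `n ↦ (w n)⁻¹ * w (n + 1)` of a sequence. -/
def seqDiff {G : Type*} [Group G] (w : ℕ → G) (n : ℕ) : G := (w n)⁻¹ * w (n + 1)

/-- A polynomial sequence with respect to `F`: all its `i`-th differences lie in `F i`. -/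
def IsPolySeq {G : Type*} [Group G] (F : ℕ → Subgroup G) (w : ℕ → G) : Prop :=
  ∀ i n : ℕ, seqDiff^[i] w n ∈ F i

theorem seqDiff_iterate_pair {G : Type*} [Group G] (w : ℕ → G) (i n : ℕ) :
    seqDiff^[i] (fun n => ((w n, w (n + 1)) : G × G)) n
      = (seqDiff^[i] w n, seqDiff^[i] w (n + 1)) := by
  induction i generalizing n with
  | zero => rfl
  | succ i ih =>
    simp only [Function.iterate_succ_apply', seqDiff, ih]
    rfl

/-- The inductive form of closure under products.  Passing from `w` to the pair
`(w n, w (n + 1))` in `G × G` lowers the number of differences to be controlled by one. -/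
theorem seqDiff_iterate_mul_mem (i : ℕ) : ∀ {G : Type*} [Group G] {F : ℕ → Subgroup G}
    (_ : IsGroupFiltration F) (u v : ℕ → G),
    (∀ l ≤ i, ∀ n, seqDiff^[l] u n ∈ F l) → (∀ l ≤ i, ∀ n, seqDiff^[l] v n ∈ F l) →
    ∀ l ≤ i, ∀ n, seqDiff^[l] (fun n => u n * v n) n ∈ F l := by
  induction i with
  | zero =>
    intro G _ F hF u v hu hv l hl n
    obtain rfl : l = 0 := by omega
    exact (F 0).mul_mem (hu 0 le_rfl n) (hv 0 le_rfl n)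
  | succ i ih =>
    intro G _ F hF u v hu hv
    have key : ∀ w : ℕ → G, (∀ l ≤ i + 1, ∀ n, seqDiff^[l] w n ∈ F l) →
        ∀ l ≤ i, ∀ n, seqDiff^[l] (fun n => ((w n, w (n + 1)) : G × G)) n
          ∈ shiftFiltration hF l := by
      intro w hw l hl n
      rw [seqDiff_iterate_pair]
      refine ⟨hw l (by omega) n, ?_⟩
      have := hw (l + 1) (by omega) n
      rwa [Function.iterate_succ_apply'] at this
    have h := ih (shiftFiltration_isGroupFiltration hF) _ _ (key u hu) (key v hv)
    have h' : ∀ l ≤ i, ∀ n, (seqDiff^[l] (fun n => u n * v n) n,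
        seqDiff^[l] (fun n => u n * v n) (n + 1)) ∈ shiftFiltration hF l := by
      intro l hl n
      rw [← seqDiff_iterate_pair]
      exact h l hl n
    intro l hl n
    rcases Nat.eq_zero_or_pos l with rfl | hpos
    · exact (h' 0 (Nat.zero_le i) n).1
    · obtain ⟨l, rfl⟩ : ∃ l', l = l' + 1 := ⟨l - 1, by omega⟩
      rw [Function.iterate_succ_apply']
      exact (h' l (by omega) n).2

theorem IsPolySeq.mul {G : Type*} [Group G] {F : ℕ → Subgroup G} (hF : IsGroupFiltration F)
    {u v : ℕ → G} (hu : IsPolySeq F u) (hv : IsPolySeq F v) :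
    IsPolySeq F (fun n => u n * v n) :=
  fun i n => seqDiff_iterate_mul_mem i hF u v (fun l _ => hu l) (fun l _ => hv l) i le_rfl n

theorem seqDiff_choose_succ {G : Type*} [Group G] (g : G) (i : ℕ) :
    seqDiff (fun n => g ^ n.choose (i + 1)) = fun n => g ^ n.choose i := by
  funext n
  simp only [seqDiff, Nat.choose_succ_succ, Nat.add_comm (n.choose i), pow_add]
  simp

theorem seqDiff_const {G : Type*} [Group G] (g : G) : seqDiff (fun _ => g) = fun _ => 1 := by
  funext n
  simp [seqDiff]

theorem seqDiff_iterate_one {G : Type*} [Group G] (i : ℕ) :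
    seqDiff^[i] (fun _ : ℕ => (1 : G)) = fun _ => 1 :=
  Function.iterate_fixed (seqDiff_const 1) i

theorem isPolySeq_choose {G : Type*} [Group G] {F : ℕ → Subgroup G} (hF : Antitone F)
    {g : G} {r : ℕ} (hg : g ∈ F r) : IsPolySeq F (fun n => g ^ n.choose r) := by
  -- only differences of order at most `r` are nontrivial, hence the slack `s + i ≤ r`
  have key : ∀ s i : ℕ, (i ≤ s → g ∈ F i) →
      ∀ n, seqDiff^[i] (fun n => g ^ n.choose s) n ∈ F i := by
    intro s i
    induction i generalizing s with
    | zero => intro h n; exact (F 0).pow_mem (h (Nat.zero_le s)) _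
    | succ i _ =>
      intro h n
      rcases le_or_gt (i + 1) s with hs | hs
      · have : ∀ j t, seqDiff^[j] (fun n => g ^ n.choose (t + j)) = fun n => g ^ n.choose t := by
          intro j
          induction j with
          | zero => intro t; rfl
          | succ j ihj =>
            intro t
            rw [Function.iterate_succ_apply, ← add_assoc, seqDiff_choose_succ, ihj]
        obtain ⟨t, rfl⟩ : ∃ t, s = t + (i + 1) := ⟨s - (i + 1), by omega⟩
        rw [this]
        exact (F (i + 1)).pow_mem (h hs) _
      · have : ∀ t j, seqDiff^[j + t + 1] (fun n => g ^ n.choose t) = fun _ => (1 : G) := by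
          intro t
          induction t with
          | zero =>
            intro j
            simp only [Nat.choose_zero_right, pow_one, Function.iterate_succ_apply, seqDiff_const]
            exact seqDiff_iterate_one _
          | succ t iht =>
            intro j
            rw [Function.iterate_succ_apply, seqDiff_choose_succ]
            exact iht j
        obtain ⟨j, hj⟩ : ∃ j, i + 1 = j + s + 1 := ⟨i - s, by omega⟩
        rw [hj, this]
        exact Subgroup.one_mem _
  exact fun i => key r i (fun hi => hF hi hg)

theorem isPolySeq_pow {G : Type*} [Group G] {F : ℕ → Subgroup G} (hF : Antitone F)
    {g : G} (hg : g ∈ F 1) : IsPolySeq F (fun n => g ^ n) := by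
  simpa using isPolySeq_choose hF hg

theorem seqDiff_iterate_of_vanish {G : Type*} [Group G] (w : ℕ → G) (i n : ℕ)
    (h : ∀ j < i, w (n + j) = 1) : seqDiff^[i] w n = w (n + i) := by
  induction i generalizing w n with
  | zero => rfl
  | succ i ih =>
    rw [Function.iterate_succ_apply, ih]
    · rw [seqDiff, h i (by omega), inv_one, one_mul, add_assoc]
    · intro j hj
      rw [seqDiff, h j (by omega), add_assoc, h (j + 1) (by omega), inv_one, one_mul]

/-- The first nontrivial Taylor coefficient of a polynomial sequence lies in the right term. -/
theorem IsPolySeq.apply_mem {G : Type*} [Group G] {F : ℕ → Subgroup G} {w : ℕ → G}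
    (hw : IsPolySeq F w) {r : ℕ} (h : ∀ j < r, w j = 1) : w r ∈ F r := by
  have := hw r 0
  rwa [seqDiff_iterate_of_vanish w r 0 (by simpa using h), zero_add] at this

/-! ### Powers of products in a nilpotent group -/

theorem commutator_lowerCentralSeries_le {G : Type*} [Group G] (a b : ℕ) :
    ∀ x ∈ (⊤ : Subgroup G).lowerCentralSeries a, ∀ y ∈ (⊤ : Subgroup G).lowerCentralSeries b,
      ⁅x, y⁆ ∈ (⊤ : Subgroup G).lowerCentralSeries (a + b + 1) := by
  rw [← Subgroup.commutator_le]
  induction a generalizing b with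
  | zero =>
    rw [Subgroup.lowerCentralSeries_zero, Subgroup.commutator_comm, zero_add]
    exact le_rfl
  | succ a ih =>
    rw [Subgroup.lowerCentralSeries_succ]
    set K := (⊤ : Subgroup G).lowerCentralSeries (a + 1 + b + 1) with hK
    have hKn : K.Normal := inferInstance
    -- the three subgroups lemma is applied in the quotient by `K`
    have hle : ∀ H : Subgroup G, H ≤ K ↔ H.map (QuotientGroup.mk' K) = ⊥ := by
      intro H
      rw [Subgroup.map_eq_bot_iff, QuotientGroup.ker_mk']
    rw [hle, Subgroup.map_commutator, Subgroup.map_commutator]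
    apply Subgroup.commutator_commutator_eq_bot_of_rotate
    · rw [← Subgroup.map_commutator, ← Subgroup.map_commutator, ← hle,
        Subgroup.commutator_comm]
      have h1 := ih (b + 1)
      rw [Subgroup.commutator_comm ⊤, ← Subgroup.lowerCentralSeries_succ]
      rwa [show a + (b + 1) + 1 = a + 1 + b + 1 by omega] at h1
    · rw [← Subgroup.map_commutator, ← Subgroup.map_commutator, ← hle]
      rw [Subgroup.commutator_comm ((⊤ : Subgroup G).lowerCentralSeries b)]
      have h1 := Subgroup.commutator_mono (ih b) (le_refl (⊤ : Subgroup G))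
      rw [← Subgroup.lowerCentralSeries_succ] at h1
      rwa [show a + b + 1 + 1 = a + 1 + b + 1 by omega] at h1

/-- The lower central series indexed so that `F 0 = F 1 = G`; here `0 - 1 = 0` is intended. -/
theorem lowerCentralSeries_isGroupFiltration (G : Type*) [Group G] :
    IsGroupFiltration (fun i => (⊤ : Subgroup G).lowerCentralSeries (i - 1)) where
  anti := fun _ _ hij => Subgroup.lowerCentralSeries_antitone _ (Nat.sub_le_sub_right hij 1)
  comm := fun a b x hx y hy =>
    Subgroup.lowerCentralSeries_antitone _ (by omega)
      (commutator_lowerCentralSeries_le (a - 1) (b - 1) x hx y hy)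

theorem prime_pow_dvd_choose_s3 {p f t r : ℕ} (hp : p.Prime) (hr : 0 < r) (hrt : r < p ^ (t + 1)) :
    p ^ f ∣ (p ^ (f + t)).choose r := by
  rcases lt_or_ge (p ^ (f + t)) r with h | h
  · rw [Nat.choose_eq_zero_of_lt h]; exact dvd_zero _
  · rw [hp.pow_dvd_iff_le_factorization (Nat.choose_pos h).ne']
    have h1 := Nat.factorization_choose_prime_pow_add_factorization hp h hr.ne'
    have h2 : r.factorization p < t + 1 := by
      by_contra hcon
      have h3 := (hp.pow_dvd_iff_le_factorization hr.ne').2 (not_lt.1 hcon)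
      exact absurd (Nat.le_of_dvd hr h3) (not_le.2 hrt)
    omega

/-- A weak Hall–Petrescu formula: for class at most `κ < p^(t+1)` and derived subgroup of exponent
dividing `p^f`, the map `x ↦ x ^ p^(f+t)` is multiplicative. -/
theorem mul_pow_prime_pow_of_class {Γ : Type*} [Group Γ] {p f t κ : ℕ} (hp : p.Prime)
    (hκ : κ < p ^ (t + 1)) (hnil : (⊤ : Subgroup Γ).lowerCentralSeries κ = ⊥)
    (hexp : ∀ d ∈ commutator Γ, d ^ p ^ f = 1) (x y : Γ) :
    (x * y) ^ p ^ (f + t) = x ^ p ^ (f + t) * y ^ p ^ (f + t) := by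
  set F : ℕ → Subgroup Γ := fun i => (⊤ : Subgroup Γ).lowerCentralSeries (i - 1) with hFdef
  have hF : IsGroupFiltration F := lowerCentralSeries_isGroupFiltration Γ
  have hbot : ∀ i, κ + 1 ≤ i → ∀ z ∈ F i, z = 1 := by
    intro i hi z hz
    have : z ∈ (⊤ : Subgroup Γ).lowerCentralSeries κ :=
      Subgroup.lowerCentralSeries_antitone _ (by omega) hz
    rwa [hnil, Subgroup.mem_bot] at this
  -- `s` counts the Taylor coefficients still to be removed
  have key : ∀ s r : ℕ, 0 < r → r + s = κ + 1 → ∀ w : ℕ → Γ, IsPolySeq F w →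
      (∀ n, w n ∈ commutator Γ) → (∀ j < r, w j = 1) → w (p ^ (f + t)) = 1 := by
    intro s
    induction s with
    | zero =>
      intro r _ hrs w hw _ hv
      have hall : ∀ n, w n = 1 := by
        intro n
        induction n using Nat.strong_induction_on with
        | _ n ih =>
          rcases lt_or_ge n r with h | h
          · exact hv n h
          · exact hbot n (by omega) _ (hw.apply_mem ih)
      exact hall _
    | succ s ih =>
      intro r hr hrs w hw hD hv
      have hmem := hw.apply_mem hv
      have h1 := ih (r + 1) (by omega) (by omega) (fun n => w n * (w r)⁻¹ ^ n.choose r)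
        (hw.mul hF (isPolySeq_choose hF.anti ((F r).inv_mem hmem)))
        (fun n => Subgroup.mul_mem _ (hD n)
          (Subgroup.pow_mem _ (Subgroup.inv_mem _ (hD r)) _))
        (by
          intro j hj
          rcases lt_or_ge j r with h | h
          · simp [hv j h, Nat.choose_eq_zero_of_lt h]
          · obtain rfl : j = r := by omega
            simp)
      obtain ⟨q, hq⟩ := prime_pow_dvd_choose_s3 (f := f) (t := t) hp hr
        (show r < p ^ (t + 1) by omega)
      simpa [hq, pow_mul, hexp _ (hD r)] using h1
  have h1 := key κ 1 one_pos (by omega) (fun n => y⁻¹ ^ n * x⁻¹ ^ n * (x * y) ^ n)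
    (((isPolySeq_pow hF.anti (by simp [hFdef])).mul hF
      (isPolySeq_pow hF.anti (by simp [hFdef]))).mul hF
      (isPolySeq_pow hF.anti (by simp [hFdef])))
    (by
      intro n
      rw [← Abelianization.ker_of, MonoidHom.mem_ker]
      simp only [map_mul, map_pow, map_inv, mul_pow, inv_pow]
      rw [← mul_inv_rev, inv_mul_cancel])
    (by
      intro j hj
      obtain rfl : j = 0 := by omega
      simp)
  simp only [inv_pow] at h1
  rw [← mul_inv_rev] at h1
  exact (inv_mul_eq_one.1 h1).symm

/-! ### The series `[N*, _j G]` of a relative central extension -/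

namespace RelCentralExt

variable {M G : Type*} [Group M] [Group G] {σ : M →* G} {N : Subgroup G}

/-- The automorphism of `M` given by the action of `g`, as an endomorphism. -/
def actHom (E : RelCentralExt σ N) (g : G) : M →* M :=
  MonoidHom.mk' (fun m => E.act m g) (fun a b => E.act_mul a b g)

theorem act_inv (E : RelCentralExt σ N) (a : M) (g : G) : E.act a⁻¹ g = (E.act a g)⁻¹ :=
  map_inv (E.actHom g) a

theorem act_pow (E : RelCentralExt σ N) (a : M) (n : ℕ) (g : G) :
    E.act (a ^ n) g = E.act a g ^ n :=
  map_pow (E.actHom g) a n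

theorem cmt_mem_iterComm_succ (E : RelCentralExt σ N) {j : ℕ} {y : M}
    (hy : y ∈ E.iterComm ⊤ j) (g : G) : E.cmt y g ∈ E.iterComm ⊤ (j + 1) :=
  Subgroup.subset_closure ⟨y, hy, g, rfl⟩

theorem act_mem_iterComm (E : RelCentralExt σ N) (j : ℕ) {y : M}
    (hy : y ∈ E.iterComm ⊤ j) (g : G) : E.act y g ∈ E.iterComm ⊤ j := by
  induction j generalizing y g with
  | zero => exact Subgroup.mem_top _
  | succ j ih =>
    have hle : E.iterComm ⊤ (j + 1) ≤ (E.iterComm ⊤ (j + 1)).comap (E.actHom g) := by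
      refine (Subgroup.closure_le _).2 ?_
      rintro _ ⟨z, hz, h, rfl⟩
      have h1 := E.cmt_mem_iterComm_succ (ih hz g) (g⁻¹ * h * g)
      change E.act (z⁻¹ * E.act z h) g ∈ E.iterComm ⊤ (j + 1)
      rw [E.act_mul, E.act_inv, E.act_act]
      rw [cmt, E.act_act] at h1
      simpa [mul_assoc] using h1
    exact hle hy

theorem iterComm_succ_le (E : RelCentralExt σ N) (j : ℕ) :
    E.iterComm ⊤ (j + 1) ≤ E.iterComm ⊤ j := by
  refine (Subgroup.closure_le _).2 ?_
  rintro _ ⟨z, hz, h, rfl⟩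
  exact Subgroup.mul_mem _ (Subgroup.inv_mem _ hz) (E.act_mem_iterComm j hz h)

theorem iterComm_normal (E : RelCentralExt σ N) (j : ℕ) : (E.iterComm ⊤ j).Normal where
  conj_mem y hy g := by
    have h := E.act_mem_iterComm j hy (σ g⁻¹)
    rwa [E.act_sigma, inv_inv] at h

theorem commutator_iterComm_le (E : RelCentralExt σ N) (j : ℕ) :
    ⁅E.iterComm ⊤ j, (⊤ : Subgroup M)⁆ ≤ E.iterComm ⊤ (j + 1) := by
  rw [Subgroup.commutator_le]
  intro y hy g _
  have h := E.cmt_mem_iterComm_succ (Subgroup.inv_mem _ hy) (σ g⁻¹)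
  rw [cmt, E.act_sigma] at h
  simpa [commutatorElement_def, mul_assoc] using h

theorem sigma_iterComm_mem (E : RelCentralExt σ N) (j : ℕ) {y : M}
    (hy : y ∈ E.iterComm ⊤ j) : σ y ∈ iterCommG N j := by
  induction j generalizing y with
  | zero =>
    have : σ y ∈ σ.range := ⟨y, rfl⟩
    rwa [E.range_eq] at this
  | succ j ih =>
    have hle : E.iterComm ⊤ (j + 1) ≤ (iterCommG N (j + 1)).comap σ := by
      refine (Subgroup.closure_le _).2 ?_
      rintro _ ⟨z, hz, h, rfl⟩
      have h1 : ⁅(σ z)⁻¹, h⁻¹⁆ ∈ iterCommG N (j + 1) :=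
        Subgroup.commutator_mem_commutator (Subgroup.inv_mem _ (ih hz)) (Subgroup.mem_top _)
      change σ (z⁻¹ * E.act z h) ∈ iterCommG N (j + 1)
      rw [map_mul, map_inv, E.sigma_act]
      simpa [commutatorElement_def, mul_assoc] using h1
    exact hle hy

theorem iterComm_eq_bot (E : RelCentralExt σ N) {k : ℕ} (hnilp : iterCommG N k = ⊥) :
    E.iterComm ⊤ (k + 1) = ⊥ := by
  rw [eq_bot_iff]
  refine (Subgroup.closure_le _).2 ?_
  rintro _ ⟨z, hz, h, rfl⟩
  have h1 := E.sigma_iterComm_mem k hz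
  rw [hnilp, Subgroup.mem_bot] at h1
  rw [cmt, E.ker_act z h1]
  simp

/-- The weak Hall–Petrescu formula for `x * c` with `x ∈ M` arbitrary and `c ∈ [M, _j G]`, obtained
in the subgroup generated by `x` and `[M, _j G]`, which has class at most `k - j + 1`. -/
theorem mul_pow_of_mem_iterComm (E : RelCentralExt σ N) {p k j f t : ℕ} (hp : p.Prime)
    (hnilp : iterCommG N k = ⊥) (hjk : j ≤ k) (ht : k - j + 1 < p ^ (t + 1))
    (hexp : ∀ d ∈ E.iterComm ⊤ (j + 1), d ^ p ^ f = 1) (x c : M) (hc : c ∈ E.iterComm ⊤ j) :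
    (x * c) ^ p ^ (f + t) = x ^ p ^ (f + t) * c ^ p ^ (f + t) := by
  have hjn := E.iterComm_normal j
  have hjn' := E.iterComm_normal (j + 1)
  set S : Subgroup M := Subgroup.zpowers x ⊔ E.iterComm ⊤ j with hS
  have hcomm : ⁅S, S⁆ ≤ E.iterComm ⊤ (j + 1) := by
    rw [Subgroup.commutator_le]
    intro a ha b hb
    obtain ⟨_, ⟨i₁, rfl⟩, l₁, hl₁, rfl⟩ := Subgroup.mem_sup_of_normal_right.1 ha
    obtain ⟨_, ⟨i₂, rfl⟩, l₂, hl₂, rfl⟩ := Subgroup.mem_sup_of_normal_right.1 hb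
    -- modulo `[M, _{j+1} G]` the elements of `[M, _j G]` are central
    have hcen : ∀ l ∈ E.iterComm ⊤ j, ∀ z : M,
        Commute (QuotientGroup.mk' (E.iterComm ⊤ (j + 1)) l)
          (QuotientGroup.mk' (E.iterComm ⊤ (j + 1)) z) := by
      intro l hl z
      rw [← commutatorElement_eq_one_iff_commute, ← map_commutatorElement,
        ← MonoidHom.mem_ker, QuotientGroup.ker_mk']
      exact E.commutator_iterComm_le j
        (Subgroup.commutator_mem_commutator hl (Subgroup.mem_top z))
    rw [← QuotientGroup.ker_mk' (E.iterComm ⊤ (j + 1)), MonoidHom.mem_ker,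
      map_commutatorElement, commutatorElement_eq_one_iff_commute]
    simp only [map_mul, map_zpow]
    refine Commute.mul_left (Commute.mul_right ?_ ?_) (Commute.mul_right ?_ ?_)
    · exact (Commute.refl _).zpow_zpow _ _
    · exact ((hcen l₂ hl₂ x).zpow_right i₁).symm
    · exact (hcen l₁ hl₁ x).zpow_right i₂
    · exact hcen l₁ hl₁ l₂
  have hlcs : ∀ i, S.lowerCentralSeries (i + 1) ≤ E.iterComm ⊤ (j + 1 + i) := by
    intro i
    induction i with
    | zero => exact hcomm
    | succ i ih =>
      rw [Subgroup.lowerCentralSeries_succ]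
      exact (Subgroup.commutator_mono ih le_top).trans (E.commutator_iterComm_le _)
  have hnil : (⊤ : Subgroup S).lowerCentralSeries (k - j + 1) = ⊥ := by
    apply Subgroup.map_injective S.subtype_injective
    rw [Subgroup.map_bot, Subgroup.top_subtype_lowerCentralSeries, eq_bot_iff]
    refine (hlcs (k - j)).trans ?_
    rw [show j + 1 + (k - j) = k + 1 by omega, E.iterComm_eq_bot hnilp]
  have hexp' : ∀ d ∈ commutator S, d ^ p ^ f = 1 := by
    intro d hd
    have h1 : (d : M) ∈ ⁅S, S⁆ := by
      rw [← Subgroup.map_subtype_commutator]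
      exact ⟨d, hd, rfl⟩
    exact Subtype.ext (hexp _ (hcomm h1))
  have h := mul_pow_prime_pow_of_class hp ht hnil hexp'
    ⟨x, Subgroup.mem_sup_left (Subgroup.mem_zpowers x)⟩ ⟨c, Subgroup.mem_sup_right hc⟩
  exact congrArg Subtype.val h

/-- One step of the descending induction: from the exponent of `[M, _{j+2} G]` to that of
`[M, _{j+1} G]`. -/
theorem pow_iterComm_succ (E : RelCentralExt σ N) {p e k j f t : ℕ} (hp : p.Prime)
    (hnilp : iterCommG N k = ⊥) (hN : ∀ n ∈ N, n ^ p ^ e = 1)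
    (hjk : j + 1 ≤ k) (ht : k - (j + 1) + 1 < p ^ (t + 1)) (hef : e ≤ f + t)
    (hexp : ∀ d ∈ E.iterComm ⊤ (j + 1 + 1), d ^ p ^ f = 1) :
    ∀ c ∈ E.iterComm ⊤ (j + 1), c ^ p ^ (f + t) = 1 := by
  have hmul := E.mul_pow_of_mem_iterComm hp hnilp hjk ht hexp
  intro c hc
  refine Subgroup.closure_induction (p := fun c _ => c ^ p ^ (f + t) = 1)
    ?_ (one_pow _) ?_ ?_ hc
  · rintro _ ⟨y, hy, g, rfl⟩
    have hker : y ^ p ^ (f + t) ∈ σ.ker := by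
      have hy' : σ y ∈ N := by rw [← E.range_eq]; exact ⟨y, rfl⟩
      obtain ⟨s, hs⟩ := Nat.exists_eq_add_of_le hef
      rw [MonoidHom.mem_ker, map_pow, hs, pow_add, pow_mul, hN _ hy', one_pow]
    have h1 := hmul y (E.cmt y g) (E.cmt_mem_iterComm_succ hy g)
    rw [cmt, mul_inv_cancel_left, ← E.act_pow, E.ker_act _ hker] at h1
    exact left_eq_mul.1 h1
  · intro a b _ hb ha' hb'
    rw [hmul a b hb, ha', hb', one_mul]
  · intro a _ ha
    rw [inv_pow, ha, inv_one]

end RelCentralExt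

/-- Theorem 2.7: let `(G, N)` be a pair of finite groups with `[N, _k G] = 1`, where `N`
is a `p`-group of exponent `p^e` admitting a complement `K` in `G`, and let
`σ : N* → G` be a relative central extension of `(G, N)` with `ker σ ≤ [N*, G]`
(e.g. a covering pair, whose kernel is `M(G, N)`). Then every element of `ker σ`
has order dividing `p^{e + m(k-1)}`, where `m = ⌊log_p k⌋`. -/
theorem stmt_3 {G : Type*} [Group G] [Finite G] (N : Subgroup G) (hN : N.Normal)
    (p e k : ℕ) (hp : p.Prime) (he : 0 < e) (hk : 0 < k)
    (m : ℕ) (hm₁ : p ^ m ≤ k) (hm₂ : ∀ m' : ℕ, p ^ m' ≤ k → m' ≤ m)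
    (hnilp : iterCommG N k = ⊥)
    (hNp : IsPGroup p N) (hexp : Monoid.exponent ↥N = p ^ e)
    (K : Subgroup G) (hdisj : N ⊓ K = ⊥)
    (hprod : ∀ g : G, ∃ n ∈ N, ∃ x ∈ K, g = n * x)
    {Nstar : Type*} [Group Nstar] (σ : Nstar →* G) (E : RelCentralExt σ N)
    (hker : σ.ker ≤ E.commSub ⊤) :
    ∀ a ∈ σ.ker, a ^ p ^ (e + m * (k - 1)) = 1 := by
  have hN' : ∀ n ∈ N, n ^ p ^ e = 1 := by
    intro n hn
    have h := Monoid.pow_exponent_eq_one (⟨n, hn⟩ : N)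
    rw [hexp] at h
    exact congrArg Subtype.val h
  have hlt : k < p ^ (m + 1) := by
    by_contra hcon
    have := hm₂ (m + 1) (not_lt.1 hcon)
    omega
  have key : ∀ d, d < k → ∀ x ∈ E.iterComm ⊤ (k - d), x ^ p ^ (e + m * d) = 1 := by
    intro d
    induction d with
    | zero =>
      intro _
      obtain ⟨j, rfl⟩ : ∃ j, k = j + 1 := ⟨k - 1, by omega⟩
      -- `[N*, _k G]` is central, so the formula is needed only for class one
      have h := E.pow_iterComm_succ (f := e) (t := 0) hp hnilp hN' le_rfl
        (by simpa using hp.one_lt) (by omega) (by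
          intro x hx
          rw [E.iterComm_eq_bot hnilp, Subgroup.mem_bot] at hx
          rw [hx, one_pow])
      simpa using h
    | succ d ih =>
      intro hd
      obtain ⟨j, hj⟩ : ∃ j, k - (d + 1) = j + 1 := ⟨k - (d + 1) - 1, by omega⟩
      have hih := ih (by omega)
      rw [show k - d = j + 1 + 1 by omega] at hih
      have h := E.pow_iterComm_succ (t := m) hp hnilp hN' (show j + 1 ≤ k by omega)
        (by omega) (by omega) hih
      rw [hj, show e + m * (d + 1) = e + m * d + m by ring]
      exact h
  intro a ha
  refine key (k - 1) (by omega) a ?_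
  rw [show k - (k - 1) = 1 by omega]
  exact hker ha
end
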